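/- Let Q denote the Gaussian tail function Q(x) = ∫_x^∞ (1/√(2π)) e^{−t²/2} dt, and let σ > 0 and c > 0. Then lim_{T→∞} T · ∫₀^∞ (a/σ²) e^{−a²/(2σ²)} Q(a√(cT)) da = 1/(4σ²c). -/

import Mathlib

open MeasureTheory Filter

/-- The Gaussian tail function `Q(x) = ∫_x^∞ (1/√(2π)) e^{−t²/2} dt`. -/
noncomputable def gaussQ (x : ℝ) : ℝ :=
  ∫ t in Set.Ioi x, (1 / Real.sqrt (2 * Real.pi)) * Real.exp (-t ^ 2 / 2)

lemma phi_int : Integrable (fun t : ℝ => (1 / Real.sqrt (2 * Real.pi)) * Real.exp (-t ^ 2 / 2)) := by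
  have h := (integrable_exp_neg_mul_sq (b := 1/2) (by norm_num)).const_mul (1 / Real.sqrt (2 * Real.pi))
  refine h.congr (Eventually.of_forall fun t => ?_)
  simp only
  congr 2
  ring

lemma gaussQ_zero : gaussQ 0 = 1 / 2 := by
  unfold gaussQ
  rw [integral_const_mul]
  have h := integral_gaussian_Ioi (1/2)
  have e : (fun t : ℝ => Real.exp (-t ^ 2 / 2)) = fun t => Real.exp (-(1/2) * t ^ 2) := by
    funext t; congr 1; ring
  rw [e, h]
  have : Real.pi / (1/2) = 2 * Real.pi := by ring
  rw [this]
  have : Real.sqrt (2 * Real.pi) ≠ 0 := by positivity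
  field_simp

lemma gaussQ_eq (x : ℝ) : gaussQ x = gaussQ 0 -
    ∫ t in (0:ℝ)..x, (1 / Real.sqrt (2 * Real.pi)) * Real.exp (-t ^ 2 / 2) := by
  unfold gaussQ
  rw [← intervalIntegral.integral_Ioi_sub_Ioi' phi_int.integrableOn phi_int.integrableOn]
  ring

lemma gaussQ_deriv (x : ℝ) :
    HasDerivAt gaussQ (-((1 / Real.sqrt (2 * Real.pi)) * Real.exp (-x ^ 2 / 2))) x := by
  have hc : Continuous (fun t : ℝ => (1 / Real.sqrt (2 * Real.pi)) * Real.exp (-t ^ 2 / 2)) := by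
    fun_prop
  have h := (hc.integral_hasStrictDerivAt 0 x).hasDerivAt.const_sub (gaussQ 0)
  exact h.congr_of_eventuallyEq (Eventually.of_forall gaussQ_eq)

lemma gaussQ_nonneg (x : ℝ) : 0 ≤ gaussQ x :=
  integral_nonneg fun t => by positivity

lemma gaussQ_le (x : ℝ) (hx : 0 ≤ x) : gaussQ x ≤ 1 / 2 := by
  rw [gaussQ_eq, gaussQ_zero]
  have := intervalIntegral.integral_nonneg (μ := volume) hx
    (f := fun t : ℝ => (1 / Real.sqrt (2 * Real.pi)) * Real.exp (-t ^ 2 / 2))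
    (fun t _ => by positivity)
  linarith

lemma rayleigh_exact (σ k : ℝ) (hσ : 0 < σ) (hk : 0 < k) :
    ∫ a in Set.Ioi (0 : ℝ), (a / σ ^ 2) * Real.exp (-a ^ 2 / (2 * σ ^ 2)) * gaussQ (a * k)
      = 1 / 2 - 1 / 2 * Real.sqrt (k ^ 2 / (k ^ 2 + 1 / σ ^ 2)) := by
  set b : ℝ := (k ^ 2 + 1 / σ ^ 2) / 2 with hb
  have hb0 : 0 < b := by positivity
  set g : ℝ → ℝ := fun a => (k / Real.sqrt (2 * Real.pi)) * Real.exp (-b * a ^ 2) with hg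
  have hgi : Integrable g := (integrable_exp_neg_mul_sq hb0).const_mul _
  set f : ℝ → ℝ := fun a => (a / σ ^ 2) * Real.exp (-a ^ 2 / (2 * σ ^ 2)) * gaussQ (a * k) with hf
  set G : ℝ → ℝ := fun a => -(Real.exp (-a ^ 2 / (2 * σ ^ 2)) * gaussQ (a * k)) with hG
  have hder : ∀ a : ℝ, HasDerivAt G (f a + g a) a := by
    intro a
    have h1 : HasDerivAt (fun a : ℝ => Real.exp (-a ^ 2 / (2 * σ ^ 2)))
        (Real.exp (-a ^ 2 / (2 * σ ^ 2)) * (-(2 * a) / (2 * σ ^ 2))) a := by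
      have := (((hasDerivAt_pow 2 a).neg).div_const (2 * σ ^ 2)).exp
      simpa using this
    have h2 : HasDerivAt (fun a : ℝ => gaussQ (a * k))
        (-((1 / Real.sqrt (2 * Real.pi)) * Real.exp (-(a * k) ^ 2 / 2)) * k) a := by
      have := (gaussQ_deriv (a * k)).comp a ((hasDerivAt_id a).mul_const k)
      rw [one_mul] at this
      exact this
    have h3 := (h1.mul h2).neg
    refine h3.congr_deriv ?_
    have e : Real.exp (-b * a ^ 2) =
        Real.exp (-a ^ 2 / (2 * σ ^ 2)) * Real.exp (-(a * k) ^ 2 / 2) := by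
      rw [← Real.exp_add]
      congr 1
      rw [hb]
      field_simp
      ring
    simp only [hf, hg, e]
    field_simp
    ring
  have hpos : ∀ a ∈ Set.Ioi (0:ℝ), 0 ≤ f a + g a := by
    intro a ha
    have ha : 0 < a := ha
    have := gaussQ_nonneg (a * k)
    simp only [hf, hg]
    positivity
  have hexp : Tendsto (fun a : ℝ => Real.exp (-a ^ 2 / (2 * σ ^ 2))) atTop (nhds 0) := by
    refine Real.tendsto_exp_atBot.comp ?_
    have : Tendsto (fun a : ℝ => -(a ^ 2 / (2 * σ ^ 2))) atTop atBot :=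
      tendsto_neg_atTop_atBot.comp
        ((tendsto_pow_atTop (two_ne_zero)).atTop_div_const (by positivity))
    refine this.congr fun a => by ring
  have hlim : Tendsto G atTop (nhds 0) := by
    have h0 : Tendsto (fun a : ℝ => Real.exp (-a ^ 2 / (2 * σ ^ 2)) * gaussQ (a * k))
        atTop (nhds 0) := by
      refine tendsto_of_tendsto_of_tendsto_of_le_of_le' tendsto_const_nhds hexp ?_ ?_
      · exact Eventually.of_forall fun a => mul_nonneg (Real.exp_pos _).le (gaussQ_nonneg _)
      · filter_upwards [eventually_ge_atTop 0] with a ha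
        have := gaussQ_le (a * k) (by positivity)
        exact mul_le_of_le_one_right (Real.exp_pos _).le (by linarith)
    simpa using h0.neg
  have hfgi := integrableOn_Ioi_deriv_of_nonneg (hder 0).continuousAt.continuousWithinAt
    (fun x _ => hder x) hpos hlim
  have hval := integral_Ioi_of_hasDerivAt_of_nonneg (hder 0).continuousAt.continuousWithinAt
    (fun x _ => hder x) hpos hlim
  have hsub : ∫ a in Set.Ioi (0:ℝ), f a =
      (∫ a in Set.Ioi (0:ℝ), (f a + g a)) - ∫ a in Set.Ioi (0:ℝ), g a := by
    rw [← integral_sub hfgi hgi.integrableOn]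
    simp
  rw [hsub, hval]
  have hG0 : G 0 = -(1 / 2) := by simp [hG, gaussQ_zero]
  have hgv : ∫ a in Set.Ioi (0:ℝ), g a = 1 / 2 * Real.sqrt (k ^ 2 / (k ^ 2 + 1 / σ ^ 2)) := by
    simp only [hg]
    rw [integral_const_mul, integral_gaussian_Ioi]
    have e1 : k ^ 2 / (k ^ 2 + 1 / σ ^ 2) = k ^ 2 * (Real.pi / b) / (2 * Real.pi) := by
      rw [hb]
      field_simp
    have hp : 0 ≤ k ^ 2 * (Real.pi / b) := by positivity
    rw [e1, Real.sqrt_div hp, Real.sqrt_mul (sq_nonneg k), Real.sqrt_sq hk.le]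
    ring
  rw [hG0, hgv]
  ring

/-- For `σ > 0` and `c > 0`,
`T · ∫₀^∞ (a/σ²) e^{−a²/(2σ²)} Q(a√(cT)) da → 1/(4σ²c)` as `T → ∞`. -/
theorem tendsto_rayleigh_expectation_gaussQ (σ c : ℝ) (hσ : 0 < σ) (hc : 0 < c) :
    Tendsto (fun T : ℝ => T * ∫ a in Set.Ioi (0 : ℝ),
        (a / σ ^ 2) * Real.exp (-a ^ 2 / (2 * σ ^ 2)) * gaussQ (a * Real.sqrt (c * T)))
      atTop (nhds (1 / (4 * σ ^ 2 * c))) := by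
  set s : ℝ := 1 / σ ^ 2 with hs
  have hs0 : 0 < s := by positivity
  have hd : Tendsto (fun T : ℝ => c * T + s) atTop atTop :=
    tendsto_atTop_add_const_right _ _ (tendsto_id.const_mul_atTop hc)
  have hr : Tendsto (fun T : ℝ => 1 - s / (c * T + s)) atTop (nhds 1) := by
    simpa using (hd.const_div_atTop s).const_sub 1
  have hm : Tendsto (fun T : ℝ => s / (2 * c) * ((1 - s / (c * T + s)) /
      (1 + Real.sqrt (1 - s / (c * T + s))))) atTop (nhds (s / (2 * c) * (1 / (1 + Real.sqrt 1)))) :=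
    (hr.div (hr.sqrt.const_add 1) (by positivity)).const_mul _
  have hv : s / (2 * c) * (1 / (1 + Real.sqrt 1)) = 1 / (4 * σ ^ 2 * c) := by
    rw [Real.sqrt_one, hs]
    field_simp
    norm_num
  rw [hv] at hm
  refine hm.congr' ?_
  filter_upwards [eventually_gt_atTop 0] with T hT
  have hcT : 0 < c * T := by positivity
  rw [rayleigh_exact σ _ hσ (Real.sqrt_pos.2 hcT), Real.sq_sqrt hcT.le, ← hs]
  have e : 1 - s / (c * T + s) = c * T / (c * T + s) := by
    field_simp
    ring
  rw [e]
  set r := c * T / (c * T + s) with hrr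
  have hr0 : 0 ≤ r := by positivity
  have hq := Real.sq_sqrt hr0
  have hq0 := Real.sqrt_nonneg r
  set q := Real.sqrt r
  have h1 : s * r = T * c * (1 - q ^ 2) := by
    rw [hq, hrr]
    field_simp
    ring
  have : s / (2 * c) * (r / (1 + q)) = (s * r) / (2 * c * (1 + q)) := by
    field_simp
  rw [this, h1]
  field_simp
  ring
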